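/- Let Y be a real Banach space with the Daugavet property. Then there exist convex, closed, bounded, symmetric (i.e., B = −B) SCD sets B₁, B₂ ⊂ Y such that the union B₁ ∪ B₂ is not SCD. -/

import Mathlib

open Bornology Set Pointwise

variable {X : Type*} [NormedAddCommGroup X] [NormedSpace ℝ X]

/-- The sliceSet of `A` given by the functional `f` and `ε > 0`. -/
noncomputable def sliceSet (A : Set X) (f : X →L[ℝ] ℝ) (ε : ℝ) : Set X :=
  {x ∈ A | sSup (f '' A) - ε < f x}

/-- `S` is a sliceSet of `A`: a nonempty set of the form `sliceSet A f ε` with `f ≠ 0`, `ε > 0`. -/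
def IsSlice (A S : Set X) : Prop :=
  S.Nonempty ∧ ∃ f : X →L[ℝ] ℝ, f ≠ 0 ∧ ∃ ε : ℝ, 0 < ε ∧ S = sliceSet A f ε

/-- A sequence of subsets of `A` is determining if every set `B` meeting all of them
has `A` inside the closed convex hull of `B`. -/
def Determining (A : Set X) (V : ℕ → Set X) : Prop :=
  ∀ B : Set X, (∀ n, (B ∩ V n).Nonempty) → A ⊆ closure (convexHull ℝ B)

/-- A bounded set is slicely countably determined if it has a determining sequence of slices. -/
def IsSCD (A : Set X) : Prop :=
  ∃ V : ℕ → Set X, (∀ n, IsSlice A (V n)) ∧ Determining A V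

/-- The Daugavet property: every rank-one operator `x ↦ f x • y` satisfies the
Daugavet equation `‖Id + T‖ = 1 + ‖T‖`. -/
def DaugavetProperty (X : Type*) [NormedAddCommGroup X] [NormedSpace ℝ X] : Prop :=
  ∀ (f : X →L[ℝ] ℝ) (y : X),
    ‖ContinuousLinearMap.id ℝ X + f.smulRight y‖ = 1 + ‖f.smulRight y‖

/-!
For linear functionals `f₁`, `f₂` with dual vectors `u₁`, `u₂`, the unit ball of `ker f₁ ⊓ ker f₂`
inherits the geometric form of the Daugavet property, and so does a suitable countable subset `Q` of
it, tested in the directions of the additive group generated by `Q`.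

`B₂` is the square with vertices `±u₁ ± u₂`. Each `q + u₂` with `q ∈ Q` is joined to `u₁` by a curve
whose plane coordinates run along the parabola `(s, 1 - s ^ 2)`, and `B₁` is the closed absolutely
convex hull of points on these curves with parameters `2⁻¹, 2⁻², …`, each `q` being used infinitely
often. Tangents to the parabola strongly expose these points, so `B₁` is SCD, while `B₁` contains
every `q + u₂` as a limit.

Every point of a curve is a convex combination of `q + u₂` and a point of `B₂`. In the union both
are available: points of `B₂` project to `0` along the plane, and by the Daugavet property `q + u₂`
is a limit of convex combinations of points whose projections are almost `ℓ₁`-orthogonal to any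
prescribed direction. So every slice of the union contains points of one of these two kinds. Given a
sequence of slices, choose points in them one by one, each almost `ℓ₁`-orthogonal to what was chosen
before: the closed convex hull of their projections misses a nonzero `q`, hence that of the points
themselves misses `q + u₂`.
-/

section ClosedConvexHull

lemma mem_closedConvexHull_iff_forall_lt {W : Set X} {x : X} :
    x ∈ closedConvexHull ℝ W ↔ ∀ (f : X →L[ℝ] ℝ) (c : ℝ), c < f x → ∃ z ∈ W, c < f z := by
  refine ⟨fun hx f c hc => ?_, fun h => ?_⟩
  · by_contra! hW
    have hsub : closedConvexHull ℝ W ⊆ {z | f z ≤ c} :=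
      closedConvexHull_min hW (convex_halfSpace_le f.isLinear c)
        (isClosed_le f.continuous continuous_const)
    exact (hsub hx).not_gt hc
  · by_contra hx
    obtain ⟨f, c, hW, hc⟩ :=
      geometric_hahn_banach_closed_point convex_closedConvexHull isClosed_closedConvexHull hx
    obtain ⟨z, hz, hcz⟩ := h f c hc
    exact (hW z (subset_closedConvexHull hz)).not_gt hcz

lemma exists_countable_subset_mem_closedConvexHull {W : Set X} {x : X}
    (hx : x ∈ closedConvexHull ℝ W) :
    ∃ C ⊆ W, C.Countable ∧ x ∈ closedConvexHull ℝ C := by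
  rw [closedConvexHull_eq_closure_convexHull] at hx
  obtain ⟨v, hv, hvx⟩ := mem_closure_iff_seq_limit.1 hx
  have hfin (n : ℕ) : ∃ t : Finset X, (t : Set X) ⊆ W ∧ v n ∈ convexHull ℝ (t : Set X) := by
    simpa only [convexHull_eq_union_convexHull_finite_subsets W, mem_iUnion, exists_prop]
      using hv n
  choose t htW hvt using hfin
  refine ⟨⋃ n, t n, iUnion_subset htW, countable_iUnion fun n => (t n).countable_toSet, ?_⟩
  refine isClosed_closedConvexHull.mem_of_tendsto hvx (.of_forall fun n => ?_)
  exact convexHull_subset_closedConvexHull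
    (convexHull_mono (subset_iUnion (fun n => (t n : Set X)) n) (hvt n))

lemma closedConvexHull_neg (W : Set X) : closedConvexHull ℝ (-W) = -closedConvexHull ℝ W := by
  rw [closedConvexHull_eq_closure_convexHull, closedConvexHull_eq_closure_convexHull,
    convexHull_neg, neg_closure]

lemma closedAbsConvexHull_eq_closedConvexHull_union_neg (D : Set X) :
    closedAbsConvexHull ℝ D = closedConvexHull ℝ (D ∪ -D) := by
  rw [closedAbsConvexHull_eq_closure_absConvexHull, closedConvexHull_eq_closure_convexHull,
    convexHull_union_neg_eq_absConvexHull]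

lemma isBounded_closedAbsConvexHull {D : Set X} (hD : IsBounded D) :
    IsBounded (closedAbsConvexHull ℝ D) := by
  rw [closedAbsConvexHull_eq_closedConvexHull_union_neg, closedConvexHull_eq_closure_convexHull]
  exact (isBounded_convexHull.2 (hD.union hD.neg)).closure

end ClosedConvexHull

section StronglyExposed

/-- `x` is a strongly exposed point of `A`: some nonzero functional attains its maximum over `A`
at `x`, and the slices of `A` that it cuts out shrink to `x` in norm. -/
def IsStronglyExposedPoint (A : Set X) (x : X) : Prop :=
  x ∈ A ∧ ∃ g : X →L[ℝ] ℝ, g ≠ 0 ∧ (∀ y ∈ A, g y ≤ g x) ∧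
    ∀ ε > 0, ∃ δ > 0, ∀ y ∈ A, g x - δ < g y → dist y x < ε

lemma IsStronglyExposedPoint.exists_isSlice_seq {A : Set X} {x : X}
    (hx : IsStronglyExposedPoint A x) :
    ∃ S : ℕ → Set X, (∀ k, IsSlice A (S k)) ∧
      ∀ B : Set X, (∀ k, (B ∩ S k).Nonempty) → x ∈ closure B := by
  obtain ⟨hxA, g, hg, hmax, hshrink⟩ := hx
  have hsup : sSup (g '' A) = g x :=
    IsGreatest.csSup_eq ⟨mem_image_of_mem g hxA, forall_mem_image.2 hmax⟩
  refine ⟨fun k => sliceSet A g (1 / (k + 1)), fun k => ?_, fun B hB => ?_⟩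
  · have hpos : (0 : ℝ) < 1 / (k + 1) := Nat.one_div_pos_of_nat
    exact ⟨⟨x, hxA, by linarith⟩, g, hg, _, hpos, rfl⟩
  · refine Metric.mem_closure_iff.2 fun ε hε => ?_
    obtain ⟨δ, hδ, hball⟩ := hshrink ε hε
    obtain ⟨k, hk⟩ := exists_nat_one_div_lt hδ
    obtain ⟨b, hbB, hbA, hgb⟩ := hB k
    exact ⟨b, hbB, by rw [dist_comm]; exact hball b hbA (by linarith)⟩

lemma isSCD_of_countable_isStronglyExposedPoint {A D : Set X} (hD : D.Countable)
    (hne : D.Nonempty) (hexp : ∀ x ∈ D, IsStronglyExposedPoint A x)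
    (hA : A ⊆ closedConvexHull ℝ D) : IsSCD A := by
  have : Countable D := hD.to_subtype
  have : Nonempty D := hne.to_subtype
  choose S hS hdet using fun x : D => (hexp x x.2).exists_isSlice_seq
  obtain ⟨e, he⟩ := exists_surjective_nat (D × ℕ)
  refine ⟨fun n => S (e n).1 (e n).2, fun n => hS _ _, fun B hB => ?_⟩
  have hDB : D ⊆ closure B := fun x hx => hdet ⟨x, hx⟩ B fun k => by
    obtain ⟨n, hn⟩ := he (⟨x, hx⟩, k)
    simpa only [hn] using hB n
  rw [← closedConvexHull_eq_closure_convexHull]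
  exact hA.trans (closedConvexHull_min (hDB.trans closure_subset_closedConvexHull)
    convex_closedConvexHull isClosed_closedConvexHull)

lemma isStronglyExposedPoint_closedConvexHull_of_gap {D : Set X} (hD : IsBounded D) {x : X}
    (hx : x ∈ D) {g : X →L[ℝ] ℝ} (hg : g ≠ 0) {γ : ℝ} (hγ : 0 < γ)
    (hgap : ∀ y ∈ D, y ≠ x → g y ≤ g x - γ) :
    IsStronglyExposedPoint (closedConvexHull ℝ D) x := by
  obtain ⟨C, hC, hDC⟩ := hD.subset_closedBall_lt 0 x
  have hhull : closedConvexHull ℝ D ⊆ {y | γ * dist y x + C * g y ≤ C * g x} := by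
    refine closedConvexHull_min (fun y hy => ?_) ?_ (isClosed_le (by fun_prop) (by fun_prop))
    · rcases eq_or_ne y x with rfl | hyx
      · simp
      · have hdist : γ * dist y x ≤ γ * C := mul_le_mul_of_nonneg_left (hDC hy) hγ.le
        have hgy : C * g y ≤ C * (g x - γ) := mul_le_mul_of_nonneg_left (hgap y hy hyx) hC.le
        change γ * dist y x + C * g y ≤ C * g x
        linarith
    · have hconv : ConvexOn ℝ univ fun y => γ * dist y x + C * g y :=
        ((convexOn_dist x convex_univ).smul hγ.le).add
          ((g.toLinearMap.convexOn convex_univ).smul hC.le)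
      simpa using hconv.convex_le (C * g x)
  refine ⟨subset_closedConvexHull hx, g, hg, fun y hy => ?_, fun ε hε => ?_⟩
  · have hy' : γ * dist y x + C * g y ≤ C * g x := hhull hy
    have hdist : 0 ≤ γ * dist y x := by positivity
    exact le_of_mul_le_mul_left (by linarith) hC
  · refine ⟨γ * ε / C, by positivity, fun y hy hgy => ?_⟩
    have hy' : γ * dist y x + C * g y ≤ C * g x := hhull hy
    have hgy' : C * (g x - g y) < γ * ε := by
      rw [← lt_div_iff₀' hC]
      linarith
    exact lt_of_mul_lt_mul_left (by linarith) hγ.le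

lemma isStronglyExposedPoint_closedAbsConvexHull_of_gap {D : Set X} (hD : IsBounded D) {x : X}
    (hx : x ∈ D) {g : X →L[ℝ] ℝ} {γ : ℝ} (hγ : 0 < γ) (hγx : γ ≤ g x)
    (hgap : ∀ y ∈ D, y ≠ x → |g y| ≤ g x - γ) :
    IsStronglyExposedPoint (closedAbsConvexHull ℝ D) x := by
  have hg : g ≠ 0 := by
    rintro rfl
    exact (hγ.trans_le hγx).false
  rw [closedAbsConvexHull_eq_closedConvexHull_union_neg]
  refine isStronglyExposedPoint_closedConvexHull_of_gap (hD.union hD.neg) (.inl hx) hg hγ ?_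
  rintro y (hy | hy) hyx
  · exact (le_abs_self _).trans (hgap y hy hyx)
  · rcases eq_or_ne (-y) x with rfl | hyx
    · rw [map_neg] at hγx ⊢
      linarith
    · simpa using (neg_le_abs _).trans (hgap (-y) hy hyx)

lemma IsStronglyExposedPoint.neg {A : Set X} {x : X} (hx : IsStronglyExposedPoint A x) :
    IsStronglyExposedPoint (-A) (-x) := by
  obtain ⟨hxA, g, hg, hmax, hshrink⟩ := hx
  refine ⟨by simpa using hxA, -g, neg_ne_zero.2 hg, fun y hy => ?_, fun ε hε => ?_⟩
  · simpa using hmax (-y) hy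
  · obtain ⟨δ, hδ, hball⟩ := hshrink ε hε
    refine ⟨δ, hδ, fun y hy hgy => ?_⟩
    rw [← dist_neg_neg, neg_neg]
    exact hball (-y) hy (by simpa using hgy)

lemma isSCD_closedAbsConvexHull_of_gap {D : Set X} (hD : D.Countable) (hne : D.Nonempty)
    (hbdd : IsBounded D)
    (hgap : ∀ x ∈ D, ∃ g : X →L[ℝ] ℝ, ∃ γ > 0, γ ≤ g x ∧ ∀ y ∈ D, y ≠ x → |g y| ≤ g x - γ) :
    IsSCD (closedAbsConvexHull ℝ D) := by
  have hexp (x : X) (hx : x ∈ D) : IsStronglyExposedPoint (closedAbsConvexHull ℝ D) x := by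
    obtain ⟨g, γ, hγ, hγx, hgx⟩ := hgap x hx
    exact isStronglyExposedPoint_closedAbsConvexHull_of_gap hbdd hx hγ hγx hgx
  have hneg : (-D).Countable := by
    rw [← image_neg_eq_neg]
    exact hD.image _
  refine isSCD_of_countable_isStronglyExposedPoint (hD.union hneg) hne.inl ?_
    (closedAbsConvexHull_eq_closedConvexHull_union_neg D).subset
  rintro x (hx | hx)
  · exact hexp x hx
  · rw [← neg_neg x, ← absConvex_convexClosedHull.1.neg_eq]
    exact (hexp (-x) hx).neg

end StronglyExposed

section NotSCD

variable {Z : Type*} [NormedAddCommGroup Z] [NormedSpace ℝ Z]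

lemma IsSlice.inter_nonempty {A S E : Set X} (hS : IsSlice A S) (hEA : E ⊆ A)
    (hAE : A ⊆ closedConvexHull ℝ E) : (E ∩ S).Nonempty := by
  obtain ⟨⟨x, hxS⟩, f, -, ε, -, rfl⟩ := hS
  obtain ⟨z, hzE, hz⟩ := mem_closedConvexHull_iff_forall_lt.1 (hAE hxS.1) f _ hxS.2
  exact ⟨z, hzE, hEA hzE, hz⟩

/- If `w` is a convex combination of the `c i`, then `∑ c i - w` has norm at most `∑ ‖c i‖`, so that
`v - w` is almost as long as `v`. -/
lemma notMem_closedConvexHull_range_of_norm_sub_sum {ι : Type*} {v : X} {c : ι → X} {ε : ℝ}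
    (hε : ε < ‖v‖)
    (hc : ∀ s : Finset ι, ‖v‖ + ∑ i ∈ s, ‖c i‖ - ε ≤ ‖v - ∑ i ∈ s, c i‖) :
    v ∉ closedConvexHull ℝ (range c) := by
  have hdist : convexHull ℝ (range c) ⊆ (Metric.ball v (‖v‖ - ε))ᶜ := by
    intro w hw
    rw [convexHull_range_eq_exists_affineCombination] at hw
    obtain ⟨s, a, ha, ha1, rfl⟩ := hw
    rw [s.affineCombination_eq_linear_combination c a ha1, mem_compl_iff, Metric.mem_ball,
      dist_comm, dist_eq_norm, not_lt]
    have ha_le (i : ι) (hi : i ∈ s) : a i ≤ 1 := ha1 ▸ Finset.single_le_sum ha hi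
    have hsplit : v - ∑ i ∈ s, c i
        = (v - ∑ i ∈ s, a i • c i) - ∑ i ∈ s, (1 - a i) • c i := by
      simp only [sub_smul, one_smul, Finset.sum_sub_distrib]
      abel
    have hrest : ‖∑ i ∈ s, (1 - a i) • c i‖ ≤ ∑ i ∈ s, ‖c i‖ := by
      refine norm_sum_le_of_le s fun i hi => ?_
      rw [norm_smul, Real.norm_of_nonneg (sub_nonneg.2 (ha_le i hi))]
      exact mul_le_of_le_one_left (norm_nonneg _) (sub_le_self 1 (ha i hi))
    have hnorm := norm_sub_le (v - ∑ i ∈ s, a i • c i) (∑ i ∈ s, (1 - a i) • c i)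
    rw [← hsplit] at hnorm
    linarith [hc s]
  rw [closedConvexHull_eq_closure_convexHull]
  exact fun hv => closure_minimal hdist Metric.isOpen_ball.isClosed_compl hv
    (Metric.mem_ball_self (sub_pos.2 hε))

lemma norm_add_sum_norm_sub_le_of_subset {E ι : Type*} [SeminormedAddCommGroup E] {v : E}
    {c : ι → E} {ε : ℝ} {s t : Finset ι} (hst : s ⊆ t)
    (ht : ‖v‖ + ∑ i ∈ t, ‖c i‖ - ε ≤ ‖v - ∑ i ∈ t, c i‖) :
    ‖v‖ + ∑ i ∈ s, ‖c i‖ - ε ≤ ‖v - ∑ i ∈ s, c i‖ := by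
  classical
  have hsplit : v - ∑ i ∈ t, c i = (v - ∑ i ∈ s, c i) - ∑ i ∈ t \ s, c i := by
    rw [← Finset.sum_sdiff hst]
    abel
  have hnorm := norm_sub_le (v - ∑ i ∈ s, c i) (∑ i ∈ t \ s, c i)
  rw [← hsplit] at hnorm
  linarith [norm_sum_le (t \ s) c, Finset.sum_sdiff hst (f := fun i => ‖c i‖)]

lemma exists_seq_norm_add_sum_norm_sub_le {E : Type*} [SeminormedAddCommGroup E]
    (G : AddSubgroup E) {T : ℕ → Set E}
    (hT : ∀ n, ∀ y ∈ G, ∀ ε > 0, ∃ c ∈ T n, c ∈ G ∧ ‖y‖ + ‖c‖ - ε ≤ ‖y - c‖)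
    {v : E} (hv : v ∈ G) {ε : ℝ} (hε : 0 < ε) :
    ∃ c : ℕ → E, (∀ n, c n ∈ T n) ∧
      ∀ n, ‖v‖ + ∑ k ∈ Finset.range n, ‖c k‖ - ε ≤ ‖v - ∑ k ∈ Finset.range n, c k‖ := by
  have hstep (n : ℕ) (y : G) :
      ∃ c : G, (c : E) ∈ T n ∧ ‖(y : E)‖ + ‖(c : E)‖ - ε / 2 / 2 ^ n ≤ ‖(y : E) - c‖ := by
    obtain ⟨c, hcT, hcG, hc⟩ := hT n y y.2 (ε / 2 / 2 ^ n) (by positivity)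
    exact ⟨⟨c, hcG⟩, hcT, hc⟩
  choose next hnextT hnext using hstep
  obtain ⟨y, hy_zero, hy_succ⟩ :
      ∃ y : ℕ → G, y 0 = ⟨v, hv⟩ ∧ ∀ n, y (n + 1) = y n - next n (y n) :=
    ⟨fun n => Nat.rec ⟨v, hv⟩ (fun n y => y - next n y) n, rfl, fun _ => rfl⟩
  let c : ℕ → E := fun n => next n (y n)
  have hy_succ (n : ℕ) : (y (n + 1) : E) = y n - c n := congrArg (fun w : G => (w : E)) (hy_succ n)
  have hy_sum (n : ℕ) : (y n : E) = v - ∑ k ∈ Finset.range n, c k := by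
    induction n with
    | zero => simp [hy_zero]
    | succ n ih => rw [hy_succ, ih, Finset.sum_range_succ, sub_sub]
  have hy_norm (n : ℕ) :
      ‖v‖ + ∑ k ∈ Finset.range n, ‖c k‖ - ε * (1 - 1 / 2 ^ n) ≤ ‖(y n : E)‖ := by
    induction n with
    | zero => simp [hy_zero]
    | succ n ih =>
      have hsplit : ε * (1 - 1 / 2 ^ (n + 1)) = ε * (1 - 1 / 2 ^ n) + ε / 2 / 2 ^ n := by
        field_simp
        ring
      rw [hy_succ, Finset.sum_range_succ, hsplit]
      linarith [hnext n (y n)]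
  refine ⟨c, fun n => hnextT n (y n), fun n => ?_⟩
  rw [← hy_sum]
  have hpow : 0 ≤ ε * (1 / 2 ^ n) := by positivity
  linarith [hy_norm n]

/-- The points of `A` whose image under `p` lies in `G` and is, up to `ε`, orthogonal to `y` in the
sense of `ℓ₁`: the triangle inequality `‖y - p b‖ ≤ ‖y‖ + ‖p b‖` is almost an equality. -/
def almostL1Orthogonal (p : X →L[ℝ] Z) (G : AddSubgroup Z) (A : Set X) (y : Z) (ε : ℝ) : Set X :=
  {b ∈ A | p b ∈ G ∧ ‖y‖ + ‖p b‖ - ε ≤ ‖y - p b‖}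

lemma neg_almostL1Orthogonal_neg {p : X →L[ℝ] Z} {G : AddSubgroup Z} {A : Set X} (hA : -A = A)
    (y : Z) (ε : ℝ) : -almostL1Orthogonal p G A (-y) ε = almostL1Orthogonal p G A y ε := by
  ext b
  have hbA : -b ∈ A ↔ b ∈ A := by rw [← Set.mem_neg, hA]
  have hnorm : ‖-y + p b‖ = ‖y - p b‖ := by rw [neg_add_eq_sub, norm_sub_rev]
  simp [almostL1Orthogonal, hbA, hnorm]

lemma not_isSCD_of_subset_closedConvexHull_almostL1Orthogonal {p : X →L[ℝ] Z} {G : AddSubgroup Z}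
    {A : Set X}
    (hA : ∀ y ∈ G, ∀ ε > 0, A ⊆ closedConvexHull ℝ (almostL1Orthogonal p G A y ε))
    {x : X} (hx : x ∈ A) (hpG : p x ∈ G) (hp0 : p x ≠ 0) : ¬ IsSCD A := by
  rintro ⟨V, hV, hdet⟩
  have hT (n : ℕ) (y : Z) (hy : y ∈ G) (ε : ℝ) (hε : ε > 0) :
      ∃ c ∈ p '' V n, c ∈ G ∧ ‖y‖ + ‖c‖ - ε ≤ ‖y - c‖ := by
    obtain ⟨b, ⟨-, hbG, hb⟩, hbV⟩ := (hV n).inter_nonempty (sep_subset _ _) (hA y hy ε hε)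
    exact ⟨p b, mem_image_of_mem p hbV, hbG, hb⟩
  have hnorm : 0 < ‖p x‖ := norm_pos_iff.2 hp0
  obtain ⟨c, hcT, hc⟩ := exists_seq_norm_add_sum_norm_sub_le G hT hpG (half_pos hnorm)
  choose b hbV hbc using hcT
  have hxb : x ∈ closure (convexHull ℝ (range b)) :=
    hdet (range b) (fun n => ⟨b n, mem_range_self n, hbV n⟩) hx
  have hpx : p x ∈ closedConvexHull ℝ (range c) := by
    have himage : p '' convexHull ℝ (range b) = convexHull ℝ (range c) := by
      rw [← funext hbc, range_comp' p b]
      exact p.toLinearMap.image_convexHull (range b)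
    rw [closedConvexHull_eq_closure_convexHull, ← himage]
    exact image_closure_subset_closure_image p.continuous (mem_image_of_mem p hxb)
  refine notMem_closedConvexHull_range_of_norm_sub_sum (half_lt_self hnorm) (fun s => ?_) hpx
  obtain ⟨n, hn⟩ := s.exists_nat_subset_range
  exact norm_add_sum_norm_sub_le_of_subset hn (hc n)

end NotSCD

section Daugavet

lemma DaugavetProperty.nontrivial (h : DaugavetProperty X) : Nontrivial X := by
  by_contra hX
  have : Subsingleton X := not_nontrivial_iff_subsingleton.1 hX
  simpa [Subsingleton.elim (ContinuousLinearMap.id ℝ X) 0] using h 0 0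

lemma apply_le_norm_of_norm_le_one (g : X →L[ℝ] ℝ) {z : X} (hz : ‖z‖ ≤ 1) : g z ≤ ‖g‖ :=
  (le_abs_self _).trans (g.unit_le_opNorm z hz)

lemma DaugavetProperty.exists_norm_id_sub_smulRight (h : DaugavetProperty X) {g : X →L[ℝ] ℝ}
    (hg : ‖g‖ = 1) (y : X) {δ : ℝ} (hδ : 0 < δ) :
    ∃ z : X, ‖z‖ ≤ 1 ∧ 0 ≤ g z ∧ 1 + ‖y‖ - δ < ‖z - g z • y‖ := by
  have hnorm : 1 + ‖y‖ - δ < ‖ContinuousLinearMap.id ℝ X + g.smulRight (-y)‖ := by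
    rw [h, ContinuousLinearMap.norm_smulRight_apply, norm_neg, hg]
    linarith
  obtain ⟨z, hz, hzδ⟩ := ContinuousLinearMap.exists_lt_apply_of_lt_opNorm _ hnorm
  have hzδ : 1 + ‖y‖ - δ < ‖z - g z • y‖ := by simpa [sub_eq_add_neg] using hzδ
  rcases le_total 0 (g z) with hgz | hgz
  · exact ⟨z, hz.le, hgz, hzδ⟩
  · refine ⟨-z, by simpa using hz.le, by simpa using hgz, ?_⟩
    rwa [map_neg, neg_smul, ← neg_sub', norm_neg]

lemma DaugavetProperty.exists_lt_apply_and_lt_norm_sub (h : DaugavetProperty X) {g : X →L[ℝ] ℝ}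
    (hg : ‖g‖ = 1) (y : X) {ε : ℝ} (hε : 0 < ε) :
    ∃ z : X, ‖z‖ ≤ 1 ∧ 1 - ε < g z ∧ ‖y‖ + 1 - ε < ‖y - z‖ := by
  wlog hy : y ≠ 0 generalizing y with hnonzero
  · have : Nontrivial X := h.nontrivial
    obtain ⟨w, hw⟩ := exists_ne (0 : X)
    obtain ⟨z, hz, hgz, hwz⟩ := hnonzero w hw
    refine ⟨z, hz, hgz, ?_⟩
    rw [not_not.1 hy, norm_zero, zero_sub, norm_neg]
    linarith [norm_sub_le w z]
  have hy_pos : 0 < ‖y‖ := norm_pos_iff.2 hy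
  obtain ⟨z, hz, hgz, hzy⟩ :=
    h.exists_norm_id_sub_smulRight hg y (δ := min (ε / 2) (‖y‖ * ε)) (by positivity)
  have hgy : ‖g z • y‖ = g z * ‖y‖ := by rw [norm_smul, Real.norm_of_nonneg hgz]
  have hgz_le : g z ≤ 1 := hg ▸ apply_le_norm_of_norm_le_one g hz
  refine ⟨z, hz, ?_, ?_⟩
  · have hlt : ‖y‖ * (1 - ε) < ‖y‖ * g z := by
      linarith [min_le_right (ε / 2) (‖y‖ * ε), norm_sub_le z (g z • y)]
    exact lt_of_mul_lt_mul_left hlt hy_pos.le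
  · have hsplit : z - g z • y = (1 - g z) • y - (y - z) := by
      rw [sub_smul, one_smul]
      abel
    have hnorm := norm_sub_le ((1 - g z) • y) (y - z)
    rw [← hsplit, norm_smul, Real.norm_of_nonneg (sub_nonneg.2 hgz_le)] at hnorm
    linarith [min_le_left (ε / 2) (‖y‖ * ε), norm_sub_le z (g z • y)]

/-- The geometric form of the Daugavet property, localized to a subset `K` of the closed unit ball
and to directions in `G`: for every `y ∈ G`, the points of `K` whose distance to `y` is almost
`‖y‖ + 1` generate `K`. The inclusion of `K` in the ball is left to the lemmas that need it. -/
def DaugavetOver (G K : Set X) : Prop :=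
  ∀ y ∈ G, ∀ ε > 0, K ⊆ closedConvexHull ℝ {z ∈ K | ‖y‖ + 1 - ε < ‖y - z‖}

lemma daugavetOver_univ_iff {K : Set X} :
    DaugavetOver univ K ↔ ∀ (g : X →L[ℝ] ℝ) (x y : X), x ∈ K → ∀ ε > 0,
      ∃ z ∈ K, g x - ε < g z ∧ ‖y‖ + 1 - ε < ‖y - z‖ := by
  refine ⟨fun h g x y hx ε hε => ?_, fun h y _ ε hε x hx => ?_⟩
  · obtain ⟨z, ⟨hzK, hyz⟩, hgz⟩ :=
      mem_closedConvexHull_iff_forall_lt.1 (h y trivial ε hε hx) g _ (sub_lt_self (g x) hε)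
    exact ⟨z, hzK, hgz, hyz⟩
  · refine mem_closedConvexHull_iff_forall_lt.2 fun g c hc => ?_
    obtain ⟨z, hzK, hgz, hyz⟩ := h g x y hx (min ε (g x - c)) (lt_min hε (sub_pos.2 hc))
    refine ⟨z, ⟨hzK, ?_⟩, ?_⟩
    · linarith [min_le_left ε (g x - c)]
    · linarith [min_le_right ε (g x - c)]

lemma DaugavetOver.exists_ne_zero {G K : Set X} (h : DaugavetOver G K) (hG : G.Nonempty)
    (hK : K.Nonempty) : ∃ z ∈ K, z ≠ 0 := by
  obtain ⟨y, hy⟩ := hG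
  obtain ⟨x, hx⟩ := hK
  obtain ⟨z, ⟨hzK, hyz⟩, -⟩ :=
    mem_closedConvexHull_iff_forall_lt.1 (h y hy 1 one_pos hx) 0 (-1) (by simp)
  refine ⟨z, hzK, ?_⟩
  rintro rfl
  simp at hyz

lemma exists_norm_eq_one_eq_norm_smul [Nontrivial X] (f : X →L[ℝ] ℝ) :
    ∃ g : X →L[ℝ] ℝ, ‖g‖ = 1 ∧ f = ‖f‖ • g := by
  rcases eq_or_ne f 0 with rfl | hf
  · obtain ⟨g, hg⟩ := exists_norm_eq (X →L[ℝ] ℝ) zero_le_one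
    exact ⟨g, hg, by simp⟩
  · have hf' : ‖f‖ ≠ 0 := norm_ne_zero_iff.2 hf
    exact ⟨‖f‖⁻¹ • f, by simp [norm_smul, hf'], by rw [smul_inv_smul₀ hf']⟩

lemma DaugavetProperty.daugavetOver_closedBall (h : DaugavetProperty X) :
    DaugavetOver univ (Metric.closedBall (0 : X) 1) := by
  refine daugavetOver_univ_iff.2 fun f x y hx ε hε => ?_
  have := h.nontrivial
  obtain ⟨g, hg, hfg⟩ := exists_norm_eq_one_eq_norm_smul f
  obtain ⟨δ, hδ, hδε⟩ := exists_pos_mul_lt hε (‖f‖ + 1)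
  obtain ⟨z, hz, hgz, hyz⟩ := h.exists_lt_apply_and_lt_norm_sub hg y hδ
  have hδf : 0 ≤ δ * ‖f‖ := by positivity
  have hfx : f x ≤ ‖f‖ := apply_le_norm_of_norm_le_one f (mem_closedBall_zero_iff.1 hx)
  have hfz : ‖f‖ * (1 - δ) ≤ f z := by
    rw [DFunLike.congr_fun hfg z]
    exact mul_le_mul_of_nonneg_left hgz.le (norm_nonneg f)
  exact ⟨z, mem_closedBall_zero_iff.2 hz, by linarith, by linarith⟩

lemma DaugavetOver.exists_le_apply {K : Set X} (h : DaugavetOver univ K)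
    (hK : K ⊆ Metric.closedBall 0 1) {f g : X →L[ℝ] ℝ} {x : X} (hx : x ∈ K) (hfx : f x = 0)
    {η : ℝ} (hη : 0 < η) (hgx : ‖g‖ - η ^ 2 < g x) (y : X) :
    ∃ z ∈ K, -(2 * η) ≤ f z ∧ ‖g‖ - 2 * η ^ 2 - η * ‖f‖ ≤ g z ∧
      ‖y‖ + 1 - η ^ 2 < ‖y - z‖ := by
  obtain ⟨z, hzK, hz, hyz⟩ := daugavetOver_univ_iff.1 h (g + η • f) x y hx (η ^ 2) (by positivity)
  have hz : g x - η ^ 2 < g z + η * f z := by simpa [hfx] using hz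
  have hz_norm : ‖z‖ ≤ 1 := mem_closedBall_zero_iff.1 (hK hzK)
  refine ⟨z, hzK, ?_, ?_, hyz⟩
  · have hηf : η * -(2 * η) ≤ η * f z := by
      linarith [apply_le_norm_of_norm_le_one g hz_norm]
    exact le_of_mul_le_mul_left hηf hη
  · have hηf : η * f z ≤ η * ‖f‖ :=
      mul_le_mul_of_nonneg_left (apply_le_norm_of_norm_le_one f hz_norm) hη.le
    linarith

lemma exists_mem_segment_abs_apply_le (f : X →L[ℝ] ℝ) {z₁ z₂ : X} {δ : ℝ} (hδ : 0 ≤ δ)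
    (h₁ : -δ ≤ f z₁) (h₂ : f z₂ ≤ δ) : ∃ z ∈ segment ℝ z₁ z₂, |f z| ≤ δ := by
  have hmem : max (f z₂) (min (f z₁) 0) ∈ f '' segment ℝ z₁ z₂ := by
    have himage : f '' segment ℝ z₁ z₂ = uIcc (f z₁) (f z₂) := by
      rw [← segment_eq_uIcc]
      exact image_segment ℝ f.toLinearMap.toAffineMap z₁ z₂
    rw [himage, mem_uIcc]
    grind
  obtain ⟨z, hz, hfz⟩ := hmem
  refine ⟨z, hz, ?_⟩
  rw [hfz, abs_le]
  grind

lemma norm_sub_sub_le_of_mem_segment {y z z₁ z₂ : X} (h₁ : ‖z₁‖ ≤ 1) (h₂ : ‖z₂‖ ≤ 1)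
    (hz : z ∈ segment ℝ z₁ z₂) : ‖y - z₁ - z₂‖ ≤ ‖y - z‖ + 1 := by
  have hreflect : z₁ + z₂ - z ∈ segment ℝ z₁ z₂ := by
    obtain ⟨a, b, ha, hb, hab, rfl⟩ := hz
    refine ⟨b, a, hb, ha, by rw [add_comm, hab], ?_⟩
    obtain rfl : b = 1 - a := by linarith
    module
  have hball : ‖z₁ + z₂ - z‖ ≤ 1 := by
    simpa using (convex_closedBall (0 : X) 1).segment_subset (by simpa) (by simpa) hreflect
  have hsplit : y - z₁ - z₂ = (y - z) - (z₁ + z₂ - z) := by abel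
  rw [hsplit]
  linarith [norm_sub_le (y - z) (z₁ + z₂ - z)]

/- Two far points, the second one also far from `y - z₁`, on either side of the hyperplane `ker f`:
the whole segment between them stays far from `y` and it crosses the hyperplane. -/
lemma DaugavetOver.exists_abs_apply_le {K : Set X} (h : DaugavetOver univ K)
    (hK : K ⊆ Metric.closedBall 0 1) (hconv : Convex ℝ K) {f g : X →L[ℝ] ℝ} {x : X} (hx : x ∈ K)
    (hfx : f x = 0) {η : ℝ} (hη : 0 < η) (hgx : ‖g‖ - η ^ 2 < g x) (y : X) :
    ∃ z ∈ K, |f z| ≤ 2 * η ∧ ‖g‖ - 2 * η ^ 2 - η * ‖f‖ ≤ g z ∧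
      ‖y‖ + 1 - 2 * η ^ 2 ≤ ‖y - z‖ := by
  obtain ⟨z₁, hz₁K, hfz₁, hgz₁, hyz₁⟩ := h.exists_le_apply hK hx hfx hη hgx y
  obtain ⟨z₂, hz₂K, hfz₂, hgz₂, hyz₂⟩ :=
    h.exists_le_apply hK (f := -f) hx (by simpa using hfx) hη hgx (y - z₁)
  rw [norm_neg] at hgz₂
  obtain ⟨z, hz, hfz⟩ :=
    exists_mem_segment_abs_apply_le f (by positivity) hfz₁ (by simpa using hfz₂)
  refine ⟨z, hconv.segment_subset hz₁K hz₂K hz, hfz, ?_, ?_⟩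
  · exact (convex_halfSpace_ge g.isLinear _).segment_subset hgz₁ hgz₂ hz
  · have hnorm (w : X) (hw : w ∈ K) : ‖w‖ ≤ 1 := mem_closedBall_zero_iff.1 (hK hw)
    linarith [norm_sub_sub_le_of_mem_segment (y := y) (hnorm z₁ hz₁K) (hnorm z₂ hz₂K) hz]

lemma exists_mem_inf_ker_norm_sub_le {N : Submodule ℝ X} {f : X →L[ℝ] ℝ} {u z : X} (hu : u ∈ N)
    (hfu : f u = 1) (hz : z ∈ N) (hz_norm : ‖z‖ ≤ 1) {δ : ℝ} (hfz : |f z| ≤ δ) :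
    ∃ w ∈ N ⊓ f.ker, ‖w‖ ≤ 1 ∧ ‖z - w‖ ≤ 2 * (δ * ‖u‖) := by
  set w := z - f z • u with hw
  set t := 1 + δ * ‖u‖ with ht
  have hδu : 0 ≤ δ * ‖u‖ := mul_nonneg ((abs_nonneg _).trans hfz) (norm_nonneg u)
  have ht_pos : 0 < t := by positivity
  have hzw : ‖z - w‖ ≤ δ * ‖u‖ := by
    rw [hw, sub_sub_cancel, norm_smul]
    exact mul_le_mul_of_nonneg_right hfz (norm_nonneg u)
  have hw_norm : ‖t⁻¹ • w‖ ≤ 1 := by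
    rw [norm_smul, norm_inv, Real.norm_of_nonneg ht_pos.le, inv_mul_le_one₀ ht_pos]
    linarith [norm_le_norm_add_norm_sub z w]
  refine ⟨t⁻¹ • w, Submodule.smul_mem _ _ ⟨sub_mem hz (N.smul_mem _ hu), by simp [hw, hfu]⟩,
    hw_norm, ?_⟩
  have hscale : w - t⁻¹ • w = (δ * ‖u‖) • t⁻¹ • w := by
    rw [← add_sub_cancel_left 1 (δ * ‖u‖), ← ht, sub_smul, smul_inv_smul₀ ht_pos.ne', one_smul]
  calc ‖z - t⁻¹ • w‖ = ‖(z - w) + (w - t⁻¹ • w)‖ := by rw [sub_add_sub_cancel]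
    _ ≤ ‖z - w‖ + ‖w - t⁻¹ • w‖ := norm_add_le _ _
    _ ≤ δ * ‖u‖ + δ * ‖u‖ := by
      gcongr
      rw [hscale, norm_smul, Real.norm_of_nonneg hδu]
      exact mul_le_of_le_one_right hδu hw_norm
    _ = 2 * (δ * ‖u‖) := by ring

lemma exists_norm_le_one_lt_apply (φ : X →L[ℝ] ℝ) {ε : ℝ} (hε : 0 < ε) :
    ∃ v : X, ‖v‖ ≤ 1 ∧ ‖φ‖ - ε < φ v := by
  obtain ⟨v, hv, hφv⟩ := φ.exists_lt_apply_of_lt_opNorm (sub_lt_self ‖φ‖ hε)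
  rcases le_total 0 (φ v) with hsign | hsign
  · exact ⟨v, hv.le, by rwa [Real.norm_of_nonneg hsign] at hφv⟩
  · exact ⟨-v, by simpa using hv.le, by rwa [Real.norm_of_nonpos hsign, ← map_neg] at hφv⟩

lemma exists_eqOn_exists_norm_sub_lt_apply (N : Submodule ℝ X) (g : X →L[ℝ] ℝ) :
    ∃ g' : X →L[ℝ] ℝ, EqOn g' g N ∧
      ∀ ε > 0, ∃ x ∈ (N : Set X) ∩ Metric.closedBall 0 1, ‖g'‖ - ε < g' x := by
  obtain ⟨g', hg', hnorm⟩ := exists_extension_norm_eq N (g.comp N.subtypeL)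
  refine ⟨g', fun w hw => hg' ⟨w, hw⟩, fun ε hε => ?_⟩
  obtain ⟨v, hv, hgv⟩ := exists_norm_le_one_lt_apply (g.comp N.subtypeL) hε
  exact ⟨v, ⟨v.2, by simpa using hv⟩, by rwa [hnorm, hg']⟩

lemma DaugavetOver.inf_ker {N : Submodule ℝ X}
    (h : DaugavetOver univ ((N : Set X) ∩ Metric.closedBall 0 1)) {f : X →L[ℝ] ℝ} {u : X}
    (hu : u ∈ N) (hfu : f u = 1) :
    DaugavetOver univ (((N ⊓ f.ker : Submodule ℝ X) : Set X) ∩ Metric.closedBall 0 1) := by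
  refine daugavetOver_univ_iff.2 fun g x y hx ε hε => ?_
  obtain ⟨g', hg', hnorming⟩ := exists_eqOn_exists_norm_sub_lt_apply (N ⊓ f.ker) g
  obtain ⟨η, hη, hηε⟩ := exists_pos_mul_lt (lt_min hε one_pos)
    (2 + ‖f‖ + 4 * ‖u‖ * (1 + ‖g'‖))
  obtain ⟨x', ⟨⟨hx'N, hfx'⟩, hx'_norm⟩, hgx'⟩ := hnorming (η ^ 2) (by positivity)
  obtain ⟨z, ⟨hzN, hz_norm⟩, hfz, hgz, hyz⟩ := h.exists_abs_apply_le inter_subset_right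
    (N.convex.inter (convex_closedBall 0 1)) ⟨hx'N, hx'_norm⟩ hfx' hη hgx' y
  obtain ⟨w, hwN, hw_norm, hzw⟩ :=
    exists_mem_inf_ker_norm_sub_le hu hfu hzN (mem_closedBall_zero_iff.1 hz_norm) hfz
  have hgzw : g' z - g' w ≤ ‖g'‖ * (2 * (2 * η * ‖u‖)) := by
    rw [← map_sub]
    exact (le_abs_self _).trans (g'.le_opNorm_of_le hzw)
  have hgx : g x ≤ ‖g'‖ := by
    rw [← hg' hx.1]
    exact apply_le_norm_of_norm_le_one g' (mem_closedBall_zero_iff.1 hx.2)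
  have hη_sq : η ^ 2 ≤ η := by
    have hpos : 0 ≤ (1 + ‖f‖ + 4 * ‖u‖ * (1 + ‖g'‖)) * η := by positivity
    have hη_le : η ≤ 1 := by linarith [min_le_right ε 1]
    exact pow_le_of_le_one hη.le hη_le two_ne_zero
  have hηf : 0 ≤ η * ‖f‖ := by positivity
  have hηu : 0 ≤ η * ‖u‖ := by positivity
  have hηug : 0 ≤ η * ‖u‖ * ‖g'‖ := by positivity
  refine ⟨w, ⟨hwN, mem_closedBall_zero_iff.2 hw_norm⟩, ?_, ?_⟩
  · rw [← hg' hwN]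
    linarith [min_le_left ε 1]
  · linarith [min_le_left ε 1, norm_sub_le_norm_sub_add_norm_sub y w z, norm_sub_rev w z]

end Daugavet

section CountableReduction

lemma countable_addSubgroup_closure {E : Type*} [AddCommGroup E] {S : Set E} (hS : S.Countable) :
    (AddSubgroup.closure S : Set E).Countable := by
  have : Countable S := hS.to_subtype
  have hspan : Countable (Submodule.span ℤ (range ((↑) : S → E))) := inferInstance
  rw [Subtype.range_coe] at hspan
  rw [← Submodule.span_int_eq_addSubgroupClosure]
  exact hspan.to_set

lemma DaugavetOver.exists_countable_superset {G K H S : Set X} (h : DaugavetOver G K)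
    (hH : H.Countable) (hHG : H ⊆ G) (hS : S.Countable) (hSK : S ⊆ K) :
    ∃ T ⊆ K, S ⊆ T ∧ T.Countable ∧
      ∀ y ∈ H, ∀ ε > 0, S ⊆ closedConvexHull ℝ {z ∈ T | ‖y‖ + 1 - ε < ‖y - z‖} := by
  have hpart (y : H) (x : S) (k : ℕ) :
      ∃ C ⊆ {z ∈ K | ‖(y : X)‖ + 1 - 1 / (k + 1) < ‖y - z‖},
        C.Countable ∧ (x : X) ∈ closedConvexHull ℝ C :=
    exists_countable_subset_mem_closedConvexHull
      (h y (hHG y.2) _ Nat.one_div_pos_of_nat (hSK x.2))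
  choose C hC hC_countable hxC using hpart
  have : Countable H := hH.to_subtype
  have : Countable S := hS.to_subtype
  refine ⟨S ∪ ⋃ y, ⋃ x, ⋃ k, C y x k, ?_, subset_union_left, ?_, fun y hy ε hε x hx => ?_⟩
  · simp only [union_subset_iff, iUnion_subset_iff]
    exact ⟨hSK, fun y x k => (hC y x k).trans (sep_subset _ _)⟩
  · exact hS.union <| countable_iUnion fun y => countable_iUnion fun x => countable_iUnion fun k =>
      hC_countable y x k
  · obtain ⟨k, hk⟩ := exists_nat_one_div_lt hε
    refine (closedConvexHull ℝ).monotone (fun z hz => ?_) (hxC ⟨y, hy⟩ ⟨x, hx⟩ k)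
    have hyz : ‖y‖ + 1 - 1 / (k + 1) < ‖y - z‖ := (hC _ _ _ hz).2
    refine ⟨.inr ?_, by linarith⟩
    simp only [mem_iUnion]
    exact ⟨_, _, _, hz⟩

lemma DaugavetOver.exists_countable_daugavetOver_closure {K S : Set X} (h : DaugavetOver univ K)
    (hS : S.Countable) (hSK : S ⊆ K) :
    ∃ Q ⊆ K, S ⊆ Q ∧ Q.Countable ∧ DaugavetOver (AddSubgroup.closure Q) Q := by
  have hstep (T : {T : Set X // T.Countable ∧ T ⊆ K}) :=
    h.exists_countable_superset (countable_addSubgroup_closure T.2.1) (subset_univ _) T.2.1 T.2.2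
  choose next hnextK hsub hcount hhull using hstep
  obtain ⟨Q, hQ_zero, hQ_succ⟩ : ∃ Q : ℕ → {T : Set X // T.Countable ∧ T ⊆ K},
      (Q 0 : Set X) = S ∧ ∀ n, (Q (n + 1) : Set X) = next (Q n) :=
    ⟨fun n => Nat.rec ⟨S, hS, hSK⟩ (fun _ T => ⟨next T, hcount T, hnextK T⟩) n, rfl,
      fun _ => rfl⟩
  have hmono : Monotone fun n => (Q n : Set X) :=
    monotone_nat_of_le_succ fun n => (hsub (Q n)).trans (hQ_succ n).superset
  have hmono_closure : Monotone fun n => AddSubgroup.closure (Q n : Set X) :=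
    fun _ _ hmn => AddSubgroup.closure_mono (hmono hmn)
  refine ⟨⋃ n, Q n, iUnion_subset fun n => (Q n).2.2,
    hQ_zero ▸ subset_iUnion (fun n => (Q n : Set X)) 0,
    countable_iUnion fun n => (Q n).2.1, fun y hy ε hε x hx => ?_⟩
  rw [SetLike.mem_coe, AddSubgroup.closure_iUnion,
    AddSubgroup.mem_iSup_of_directed hmono_closure.directed_le] at hy
  obtain ⟨m, hm⟩ := hy
  obtain ⟨n, hn⟩ := mem_iUnion.1 hx
  have hx_hull := hhull (Q (max m n)) y (hmono_closure (le_max_left m n) hm) ε hε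
    (hmono (le_max_right m n) hn)
  rw [← hQ_succ] at hx_hull
  refine (closedConvexHull ℝ).monotone (fun z hz => ?_) hx_hull
  exact ⟨subset_iUnion (fun n => (Q n : Set X)) (max m n + 1) hz.1, hz.2⟩

end CountableReduction

section Construction

lemma quarter_half_pow_sq_le_sq_sub {m n : ℕ} (hmn : m ≠ n) :
    ((1 / 2 : ℝ) ^ n) ^ 2 / 4 ≤ ((1 / 2 : ℝ) ^ m - (1 / 2) ^ n) ^ 2 := by
  have hpow {i j : ℕ} (hij : i < j) : (1 / 2 : ℝ) ^ j ≤ (1 / 2) ^ i / 2 := by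
    calc (1 / 2 : ℝ) ^ j ≤ (1 / 2) ^ (i + 1) :=
          pow_le_pow_of_le_one (by norm_num) (by norm_num) hij
      _ = (1 / 2) ^ i / 2 := by rw [pow_succ]; ring
  have hpos : 0 < (1 / 2 : ℝ) ^ n := by positivity
  rcases hmn.lt_or_gt with hlt | hlt
  · nlinarith [hpow hlt]
  · nlinarith [hpow hlt]

lemma exists_seq_frequently_eq {α : Type*} {Q : Set α} (hQ : Q.Countable) (hne : Q.Nonempty) :
    ∃ x : ℕ → α, (∀ n, x n ∈ Q) ∧ ∀ q ∈ Q, ∃ᶠ n in Filter.atTop, x n = q := by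
  obtain ⟨e, rfl⟩ := hQ.exists_eq_range hne
  refine ⟨fun n => e n.unpair.1, fun n => mem_range_self _, ?_⟩
  rintro - ⟨k, rfl⟩
  refine Filter.frequently_atTop.2 fun N => ⟨Nat.pair k N, Nat.right_le_pair k N, ?_⟩
  simp only [Nat.unpair_pair]

/-- Two vectors `u₁`, `u₂` of `X` with a biorthogonal pair of functionals `f₁`, `f₂`: coordinates
on a plane in `X` together with a complement of that plane. -/
structure BiorthogonalPair (X : Type*) [NormedAddCommGroup X] [NormedSpace ℝ X] where
  u₁ : X
  u₂ : X
  f₁ : X →L[ℝ] ℝ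
  f₂ : X →L[ℝ] ℝ
  f₁_u₁ : f₁ u₁ = 1
  f₁_u₂ : f₁ u₂ = 0
  f₂_u₁ : f₂ u₁ = 0
  f₂_u₂ : f₂ u₂ = 1

namespace BiorthogonalPair

attribute [simp] f₁_u₁ f₁_u₂ f₂_u₁ f₂_u₂

variable (P : BiorthogonalPair X)

/-- The complement of the plane spanned by `u₁` and `u₂` on which both coordinates vanish. -/
def complement : Submodule ℝ X := P.f₁.ker ⊓ P.f₂.ker

/-- The projection onto `P.complement` along the plane spanned by `u₁` and `u₂`. -/
noncomputable def proj : X →L[ℝ] X :=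
  .id ℝ X - P.f₁.smulRight P.u₁ - P.f₂.smulRight P.u₂

variable {P} in
lemma f₁_eq_zero {x : X} (hx : x ∈ P.complement) : P.f₁ x = 0 := hx.1

variable {P} in
lemma f₂_eq_zero {x : X} (hx : x ∈ P.complement) : P.f₂ x = 0 := hx.2

@[simp] lemma proj_u₁ : P.proj P.u₁ = 0 := by simp [proj]

@[simp] lemma proj_u₂ : P.proj P.u₂ = 0 := by simp [proj]

lemma proj_add_u₂ {x : X} (hx : x ∈ P.complement) : P.proj (x + P.u₂) = x := by
  rw [map_add, proj_u₂, add_zero]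
  simp [proj, f₁_eq_zero hx, f₂_eq_zero hx]

/-- The parallelogram in the plane of `P` with vertices `±u₁ ± u₂`. -/
def square : Set X := closedAbsConvexHull ℝ {P.u₁ + P.u₂, P.u₁ - P.u₂}

lemma isBounded_square : IsBounded P.square :=
  isBounded_closedAbsConvexHull (Set.toFinite _).isBounded

lemma isSCD_square : IsSCD P.square := by
  refine isSCD_closedAbsConvexHull_of_gap (Set.toFinite _).countable (insert_nonempty _ _)
    (Set.toFinite _).isBounded ?_
  rintro x (rfl | rfl)
  · refine ⟨P.f₁ + P.f₂, 1, one_pos, by simp, ?_⟩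
    rintro y (rfl | rfl) hyx
    · exact absurd rfl hyx
    · norm_num
  · refine ⟨P.f₁ - P.f₂, 1, one_pos, by simp, ?_⟩
    rintro y (rfl | rfl) hyx
    · norm_num
    · exact absurd rfl hyx

variable {P} in
lemma proj_eq_zero_of_mem_square {x : X} (hx : x ∈ P.square) : P.proj x = 0 := by
  have hker : P.square ⊆ P.proj.ker := by
    have hbalanced : Balanced ℝ (P.proj.ker : Set X) :=
      balanced_iff_smul_mem.2 fun t _ y hy => P.proj.ker.smul_mem t hy
    refine closedAbsConvexHull_min ?_ ⟨hbalanced, P.proj.ker.convex⟩ P.proj.isClosed_ker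
    rintro y (rfl | rfl) <;> simp
  exact hker hx

lemma u₁_add_smul_u₂_mem_square {t : ℝ} (ht : |t| ≤ 1) : P.u₁ + t • P.u₂ ∈ P.square := by
  obtain ⟨ht₁, ht₂⟩ := abs_le.1 ht
  have hplus : P.u₁ + P.u₂ ∈ P.square := subset_closedAbsConvexHull (by simp)
  have hminus : P.u₁ - P.u₂ ∈ P.square := subset_closedAbsConvexHull (by simp)
  have hcomb : P.u₁ + t • P.u₂
      = ((1 + t) / 2) • (P.u₁ + P.u₂) + ((1 - t) / 2) • (P.u₁ - P.u₂) := by module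
  rw [hcomb]
  exact absConvex_convexClosedHull.2 hplus hminus (by linarith) (by linarith) (by ring)

/-- A parabolic path from `x + u₂` (at `s = 0`) to `u₁` (at `s = 1`). Its plane coordinates run
along the parabola `(s, 1 - s ^ 2)`, so distinct parameters give points in convex position. -/
def curve (x : X) (s : ℝ) : X := (1 - s) • x + s • P.u₁ + (1 - s ^ 2) • P.u₂

lemma curve_eq (x : X) (s : ℝ) :
    P.curve x s = (1 - s) • (x + P.u₂) + s • (P.u₁ + (1 - s) • P.u₂) := by
  rw [curve]
  module

lemma norm_curve_le (x : X) {s : ℝ} (hs₀ : 0 ≤ s) (hs₁ : s ≤ 1) :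
    ‖P.curve x s‖ ≤ ‖x‖ + ‖P.u₁‖ + ‖P.u₂‖ := by
  have hsmul {t : ℝ} (ht₀ : 0 ≤ t) (ht₁ : t ≤ 1) (v : X) : ‖t • v‖ ≤ ‖v‖ := by
    rw [norm_smul, Real.norm_of_nonneg ht₀]
    exact mul_le_of_le_one_left (norm_nonneg v) ht₁
  have hs_sq : s ^ 2 ≤ 1 := pow_le_one₀ hs₀ hs₁
  refine norm_add₃_le.trans (add_le_add_three ?_ (hsmul hs₀ hs₁ P.u₁) ?_)
  · exact hsmul (by linarith) (by linarith) x
  · exact hsmul (by linarith) (by linarith [sq_nonneg s]) P.u₂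

/-- The points of the curves starting at `x n + u₂` with parameters `2⁻¹, 2⁻², 2⁻³, …`. -/
noncomputable def curvePoint (x : ℕ → X) (n : ℕ) : X := P.curve (x n) ((1 / 2) ^ (n + 1))

/-- The closed absolutely convex hull of the points `P.curvePoint x n`. -/
noncomputable def curveHull (x : ℕ → X) : Set X := closedAbsConvexHull ℝ (range (P.curvePoint x))

lemma isBounded_range_curvePoint {x : ℕ → X} (hx : IsBounded (range x)) :
    IsBounded (range (P.curvePoint x)) := by
  obtain ⟨C, hC⟩ := hx.exists_norm_le
  refine isBounded_iff_forall_norm_le.2 ⟨C + ‖P.u₁‖ + ‖P.u₂‖, forall_mem_range.2 fun n => ?_⟩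
  have hs : (1 / 2 : ℝ) ^ (n + 1) ≤ 1 := pow_le_one₀ (by norm_num) (by norm_num)
  have hcurve := P.norm_curve_le (x n) (by positivity) hs
  have hxn := hC (x n) (mem_range_self n)
  rw [curvePoint]
  linarith

lemma isBounded_curveHull {x : ℕ → X} (hx : IsBounded (range x)) : IsBounded (P.curveHull x) :=
  isBounded_closedAbsConvexHull (P.isBounded_range_curvePoint hx)

/- The tangent to the parabola at the parameter `s` exposes the corresponding point. -/
lemma tangent_apply_curve {x : X} (hx : x ∈ P.complement) (s t : ℝ) :
    (P.f₂ + (2 * s) • P.f₁) (P.curve x t) = 1 + s ^ 2 - (t - s) ^ 2 := by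
  have hf₁ : P.f₁ (P.curve x t) = t := by simp [curve, f₁_eq_zero hx]
  have hf₂ : P.f₂ (P.curve x t) = 1 - t ^ 2 := by simp [curve, f₂_eq_zero hx]
  calc (P.f₂ + (2 * s) • P.f₁) (P.curve x t) = 1 - t ^ 2 + 2 * s * t := by simp [hf₁, hf₂]
    _ = 1 + s ^ 2 - (t - s) ^ 2 := by ring

lemma isSCD_curveHull {x : ℕ → X} (hx : ∀ n, x n ∈ P.complement) (hbdd : IsBounded (range x)) :
    IsSCD (P.curveHull x) := by
  refine isSCD_closedAbsConvexHull_of_gap (countable_range _) (range_nonempty _)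
    (P.isBounded_range_curvePoint hbdd) (forall_mem_range.2 fun n => ?_)
  set s : ℝ := (1 / 2) ^ (n + 1)
  have hs_pos : 0 < s := by positivity
  have hgn : (P.f₂ + (2 * s) • P.f₁) (P.curvePoint x n) = 1 + s ^ 2 := by
    rw [curvePoint, P.tangent_apply_curve (hx n), sub_self]
    ring
  refine ⟨P.f₂ + (2 * s) • P.f₁, s ^ 2 / 4, by positivity, by rw [hgn]; nlinarith,
    forall_mem_range.2 fun m hmn => ?_⟩
  set t : ℝ := (1 / 2) ^ (m + 1) with ht
  have ht_pos : 0 < t := by positivity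
  have ht_le : t ≤ 1 := pow_le_one₀ (by norm_num) (by norm_num)
  have hgap : s ^ 2 / 4 ≤ (t - s) ^ 2 :=
    quarter_half_pow_sq_le_sq_sub fun hmn' => hmn (by rw [Nat.succ_injective hmn'])
  rw [hgn, curvePoint, P.tangent_apply_curve (hx m), ← ht, abs_of_nonneg (by nlinarith)]
  linarith

lemma add_u₂_mem_curveHull {x : ℕ → X} {q : X} (hq : ∃ᶠ n in Filter.atTop, x n = q) :
    q + P.u₂ ∈ P.curveHull x := by
  have hparam : Filter.Tendsto (fun n : ℕ => (1 / 2 : ℝ) ^ (n + 1)) Filter.atTop (nhds 0) :=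
    (tendsto_pow_atTop_nhds_zero_of_lt_one (by norm_num) (by norm_num)).comp
      (Filter.tendsto_add_atTop_nat 1)
  have hcont : Continuous (P.curve q) := by
    unfold curve
    fun_prop
  have hlim : Filter.Tendsto (fun n : ℕ => P.curve q ((1 / 2) ^ (n + 1))) Filter.atTop
      (nhds (q + P.u₂)) := by
    have hzero : P.curve q 0 = q + P.u₂ := by simp [curve]
    exact hzero ▸ (hcont.tendsto 0).comp hparam
  refine isClosed_closedAbsConvexHull.closure_subset
    (mem_closure_of_frequently_of_tendsto (hq.mono fun n hn => ?_) hlim)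
  exact subset_closedAbsConvexHull ⟨n, by rw [curvePoint, hn]⟩

variable {P}

lemma square_subset_almostL1Orthogonal {G : AddSubgroup X} {A : Set X} (hA : P.square ⊆ A) (y : X)
    {ε : ℝ} (hε : 0 ≤ ε) : P.square ⊆ almostL1Orthogonal P.proj G A y ε := by
  intro b hb
  simp only [almostL1Orthogonal, mem_ofPred_eq, proj_eq_zero_of_mem_square hb]
  exact ⟨hA hb, zero_mem G, by simpa using hε⟩

lemma add_u₂_mem_closedConvexHull_almostL1Orthogonal {G : AddSubgroup X} {A Q : Set X}
    (hQ : DaugavetOver G Q) (hQG : Q ⊆ G) (hQP : Q ⊆ P.complement)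
    (hQ_ball : Q ⊆ Metric.closedBall 0 1) (hA : ∀ q ∈ Q, q + P.u₂ ∈ A) {y : X} (hy : y ∈ G)
    {ε : ℝ} (hε : 0 < ε) {q : X} (hq : q ∈ Q) :
    q + P.u₂ ∈ closedConvexHull ℝ (almostL1Orthogonal P.proj G A y ε) := by
  have hfar : {z ∈ Q | ‖y‖ + 1 - ε < ‖y - z‖} ⊆
      (fun z => P.u₂ + z) ⁻¹' almostL1Orthogonal P.proj G A y ε := by
    rintro z ⟨hzQ, hyz⟩
    have hz_norm : ‖z‖ ≤ 1 := mem_closedBall_zero_iff.1 (hQ_ball hzQ)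
    simp only [almostL1Orthogonal, mem_preimage, mem_ofPred_eq, add_comm P.u₂,
      P.proj_add_u₂ (hQP hzQ)]
    exact ⟨hA z hzQ, hQG hzQ, by linarith⟩
  have hhull : closedConvexHull ℝ {z ∈ Q | ‖y‖ + 1 - ε < ‖y - z‖} ⊆
      (fun z => P.u₂ + z) ⁻¹' closedConvexHull ℝ (almostL1Orthogonal P.proj G A y ε) :=
    closedConvexHull_min (hfar.trans (preimage_mono subset_closedConvexHull))
      (convex_closedConvexHull.translate_preimage_right P.u₂)
      (isClosed_closedConvexHull.preimage (by fun_prop))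
  rw [add_comm]
  exact hhull (hQ y hy ε hε hq)

lemma curve_mem_of_convex {C : Set X} (hC : Convex ℝ C) (hsquare : P.square ⊆ C) {x : X}
    (hx : x + P.u₂ ∈ C) {s : ℝ} (hs₀ : 0 ≤ s) (hs₁ : s ≤ 1) : P.curve x s ∈ C := by
  have hmem : P.u₁ + (1 - s) • P.u₂ ∈ P.square :=
    P.u₁_add_smul_u₂_mem_square (abs_le.2 ⟨by linarith, by linarith⟩)
  rw [curve_eq]
  exact hC hx (hsquare hmem) (by linarith) hs₀ (by ring)

lemma not_isSCD_curveHull_union_square {Q : Set X} (hQP : Q ⊆ P.complement)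
    (hQ_ball : Q ⊆ Metric.closedBall 0 1) (hQ : DaugavetOver (AddSubgroup.closure Q) Q)
    {x : ℕ → X} (hxQ : ∀ n, x n ∈ Q) (hfreq : ∀ q ∈ Q, ∃ᶠ n in Filter.atTop, x n = q) {q₀ : X}
    (hq₀ : q₀ ∈ Q) (hq₀_ne : q₀ ≠ 0) : ¬ IsSCD (P.curveHull x ∪ P.square) := by
  set A := P.curveHull x ∪ P.square with hA
  set G := AddSubgroup.closure Q
  have hQG : Q ⊆ G := AddSubgroup.subset_closure
  have hQA (q : X) (hq : q ∈ Q) : q + P.u₂ ∈ A := .inl (P.add_u₂_mem_curveHull (hfreq q hq))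
  have hnegA : -A = A := by
    rw [hA, union_neg, curveHull, square, absConvex_convexClosedHull.1.neg_eq,
      absConvex_convexClosedHull.1.neg_eq]
  have hsquare (y : X) (ε : ℝ) (hε : 0 < ε) :
      P.square ⊆ closedConvexHull ℝ (almostL1Orthogonal P.proj G A y ε) :=
    (square_subset_almostL1Orthogonal subset_union_right y hε.le).trans subset_closedConvexHull
  have hrange (y : X) (hy : y ∈ G) (ε : ℝ) (hε : 0 < ε) :
      range (P.curvePoint x) ⊆ closedConvexHull ℝ (almostL1Orthogonal P.proj G A y ε) :=
    range_subset_iff.2 fun n => curve_mem_of_convex convex_closedConvexHull (hsquare y ε hε)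
      (add_u₂_mem_closedConvexHull_almostL1Orthogonal hQ hQG hQP hQ_ball hQA hy hε (hxQ n))
      (by positivity) (pow_le_one₀ (by norm_num) (by norm_num))
  have hproj : P.proj (q₀ + P.u₂) = q₀ := P.proj_add_u₂ (hQP hq₀)
  refine not_isSCD_of_subset_closedConvexHull_almostL1Orthogonal (fun y hy ε hε => ?_)
    (hQA q₀ hq₀) (by rw [hproj]; exact hQG hq₀) (by rwa [hproj])
  refine union_subset ?_ (hsquare y ε hε)
  rw [curveHull, closedAbsConvexHull_eq_closedConvexHull_union_neg]
  refine closedConvexHull_min (union_subset (hrange y hy ε hε) ?_) convex_closedConvexHull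
    isClosed_closedConvexHull
  rw [← neg_almostL1Orthogonal_neg hnegA, closedConvexHull_neg, neg_subset_neg]
  exact hrange (-y) (neg_mem hy) ε hε

end BiorthogonalPair

lemma DaugavetProperty.exists_biorthogonalPair (h : DaugavetProperty X) :
    ∃ P : BiorthogonalPair X,
      DaugavetOver univ ((P.complement : Set X) ∩ Metric.closedBall 0 1) := by
  have hball (N : Submodule ℝ X) : ((N : Set X) ∩ Metric.closedBall 0 1).Nonempty :=
    ⟨0, zero_mem N, by simp⟩
  have htop : DaugavetOver univ (((⊤ : Submodule ℝ X) : Set X) ∩ Metric.closedBall 0 1) := by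
    simpa using h.daugavetOver_closedBall
  obtain ⟨u₁, ⟨hu₁, -⟩, hu₁_ne⟩ := htop.exists_ne_zero univ_nonempty (hball ⊤)
  obtain ⟨f₁, hf₁u₁⟩ := SeparatingDual.exists_eq_one (R := ℝ) hu₁_ne
  have hker := htop.inf_ker hu₁ hf₁u₁
  rw [top_inf_eq] at hker
  obtain ⟨u₂, ⟨hu₂, -⟩, hu₂_ne⟩ := hker.exists_ne_zero univ_nonempty (hball f₁.ker)
  have hf₁u₂ : f₁ u₂ = 0 := hu₂
  obtain ⟨g, hgu₂⟩ := SeparatingDual.exists_eq_one (R := ℝ) hu₂_ne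
  let P : BiorthogonalPair X :=
    { u₁, u₂, f₁
      f₂ := g - g u₁ • f₁
      f₁_u₁ := hf₁u₁
      f₁_u₂ := hf₁u₂
      f₂_u₁ := by simp [hf₁u₁]
      f₂_u₂ := by simp [hf₁u₂, hgu₂] }
  exact ⟨P, hker.inf_ker hu₂ P.f₂_u₂⟩

end Construction

theorem exists_symmetric_scd_sets_union_not_scd_general
    {Y : Type*} [NormedAddCommGroup Y] [NormedSpace ℝ Y] (h : DaugavetProperty Y) :
    ∃ B₁ B₂ : Set Y,
      Convex ℝ B₁ ∧ IsClosed B₁ ∧ IsBounded B₁ ∧ B₁ = -B₁ ∧ IsSCD B₁ ∧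
      Convex ℝ B₂ ∧ IsClosed B₂ ∧ IsBounded B₂ ∧ B₂ = -B₂ ∧ IsSCD B₂ ∧
      ¬ IsSCD (B₁ ∪ B₂) := by
  obtain ⟨P, hP⟩ := h.exists_biorthogonalPair
  obtain ⟨q₀, hq₀, hq₀_ne⟩ := hP.exists_ne_zero univ_nonempty ⟨0, zero_mem _, by simp⟩
  obtain ⟨Q, hQ_sub, hq₀Q, hQ_countable, hQ⟩ :=
    hP.exists_countable_daugavetOver_closure (countable_singleton q₀) (singleton_subset_iff.2 hq₀)
  obtain ⟨hQP, hQ_ball⟩ := subset_inter_iff.1 hQ_sub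
  rw [singleton_subset_iff] at hq₀Q
  obtain ⟨x, hxQ, hfreq⟩ := exists_seq_frequently_eq hQ_countable ⟨q₀, hq₀Q⟩
  have hx_bdd : IsBounded (range x) :=
    Metric.isBounded_closedBall.subset ((range_subset_iff.2 hxQ).trans hQ_ball)
  exact ⟨P.curveHull x, P.square,
    absConvex_convexClosedHull.2, isClosed_closedAbsConvexHull, P.isBounded_curveHull hx_bdd,
    absConvex_convexClosedHull.1.neg_eq.symm, P.isSCD_curveHull (fun n => hQP (hxQ n)) hx_bdd,
    absConvex_convexClosedHull.2, isClosed_closedAbsConvexHull, P.isBounded_square,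
    absConvex_convexClosedHull.1.neg_eq.symm, P.isSCD_square,
    P.not_isSCD_curveHull_union_square hQP hQ_ball hQ hxQ hfreq hq₀Q hq₀_ne⟩

theorem exists_symmetric_scd_sets_union_not_scd
    {Y : Type*} [NormedAddCommGroup Y] [NormedSpace ℝ Y] [CompleteSpace Y]
    (h : DaugavetProperty Y) :
    ∃ B₁ B₂ : Set Y,
      Convex ℝ B₁ ∧ IsClosed B₁ ∧ IsBounded B₁ ∧ B₁ = -B₁ ∧ IsSCD B₁ ∧
      Convex ℝ B₂ ∧ IsClosed B₂ ∧ IsBounded B₂ ∧ B₂ = -B₂ ∧ IsSCD B₂ ∧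
      ¬ IsSCD (B₁ ∪ B₂) := by
  exact exists_symmetric_scd_sets_union_not_scd_general h
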